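/- For all n ≥ 0, B^{(2)}_{n,α}(x;q) = q^{n(n-1)/2} B^{(1)}_{n,α}(x;1/q), and in particular β_{n,α}(q) = q^{n(n-1)/2} β_{n,α}(1/q). -/

import Mathlib

/-- The q-shifted factorial `(a;q)_n`. -/
noncomputable def qPoch (a q : ℂ) (n : ℕ) : ℂ := ∏ k ∈ Finset.range n, (1 - a * q ^ k)

/-- The q-factorial `[n]_q!`. -/
noncomputable def qFact (q : ℂ) (n : ℕ) : ℂ := qPoch q q n / (1 - q) ^ n

/-- The Gaussian binomial coefficient. -/
noncomputable def qBinom (q : ℂ) (n k : ℕ) : ℂ :=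
  qPoch q q n / (qPoch q q k * qPoch q q (n - k))

/-- `β : ℕ → ℂ` is the sequence of generalized q-Bernoulli numbers `β_{n,α}(q)`:
`β_0 = 1` and for `n ≥ 1`,
`∑_{k=0}^{⌊n/2⌋} (1-q)^{2k} β_{n-2k} / (2^{2k} [n-2k]_q! (q²;q²)_k (q^{2α+2};q²)_k)
  = (-1/2)^n / [n]_q!`. -/
def qBetaSpec (q α : ℝ) (β : ℕ → ℂ) : Prop :=
  β 0 = 1 ∧ ∀ n : ℕ, 1 ≤ n →
    ∑ k ∈ Finset.range (n / 2 + 1),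
      ((1 : ℂ) - q) ^ (2 * k) * β (n - 2 * k) /
        (2 ^ (2 * k) * qFact (q : ℂ) (n - 2 * k) *
          qPoch ((q : ℂ) ^ 2) ((q : ℂ) ^ 2) k *
          qPoch (((q ^ (2 * α + 2) : ℝ) : ℂ)) ((q : ℂ) ^ 2) k)
      = (-1 / 2) ^ n / qFact (q : ℂ) n

/-- `B^{(1)}_{n,α}(x;q) = ∑_{k=0}^n [n,k]_q c_{n-k} x^k`. -/
noncomputable def B1poly (q : ℂ) (c : ℕ → ℂ) (n : ℕ) (x : ℂ) : ℂ :=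
  ∑ k ∈ Finset.range (n + 1), qBinom q n k * c (n - k) * x ^ k

/-- `B^{(2)}_{n,α}(x;q) = ∑_{k=0}^n [n,k]_q q^{k(k-1)/2} c_{n-k} x^k`. -/
noncomputable def B2poly (q : ℂ) (c : ℕ → ℂ) (n : ℕ) (x : ℂ) : ℂ :=
  ∑ k ∈ Finset.range (n + 1), qBinom q n k * q ^ (k * (k - 1) / 2) * c (n - k) * x ^ k


noncomputable def Eser (q : ℂ) : PowerSeries ℂ :=
  PowerSeries.mk fun n => (-1) ^ n * q ^ (n * (n - 1) / 2) / qPoch q q n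

noncomputable def eser (q : ℂ) : PowerSeries ℂ :=
  PowerSeries.mk fun n => (-1) ^ n / qPoch q q n

noncomputable def Fser (Q c : ℂ) : PowerSeries ℂ :=
  PowerSeries.mk fun n => 1 / (qPoch Q Q n * qPoch c Q n)

noncomputable def Gser (Q c : ℂ) : PowerSeries ℂ :=
  PowerSeries.mk fun n => (Q ^ (n * (n - 1) / 2)) ^ 2 * c ^ n / (qPoch Q Q n * qPoch c Q n)

lemma qPoch_succ (a q : ℂ) (n : ℕ) : qPoch a q (n + 1) = qPoch a q n * (1 - a * q ^ n) := by
  simp [qPoch, Finset.prod_range_succ]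

lemma qPoch_zero (a q : ℂ) : qPoch a q 0 = 1 := by simp [qPoch]

lemma qPoch_ne (a q : ℂ) (h : ∀ n : ℕ, 1 - a * q ^ n ≠ 0) (n : ℕ) : qPoch a q n ≠ 0 := by
  unfold qPoch
  exact Finset.prod_ne_zero_iff.mpr fun k _ => h k

open PowerSeries

lemma Eser_fe (q : ℂ) (h : ∀ n : ℕ, 1 - q * q ^ n ≠ 0) :
    Eser q = (1 - X) * rescale q (Eser q) := by
  ext n
  rw [sub_mul, one_mul]
  cases n with
  | zero =>
    rw [map_sub, coeff_zero_X_mul, coeff_rescale]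
    simp [Eser, qPoch_zero]
  | succ n =>
    rw [map_sub, coeff_succ_X_mul, coeff_rescale, coeff_rescale]
    simp only [Eser, coeff_mk, qPoch_succ, Nat.triangle_succ]
    have := qPoch_ne q q h n
    have := h n
    field_simp
    ring

lemma eser_fe (q : ℂ) (h : ∀ n : ℕ, 1 - q * q ^ n ≠ 0) :
    rescale q (eser q) = (1 + X) * eser q := by
  ext n
  rw [add_mul, one_mul]
  cases n with
  | zero => simp [eser, qPoch_zero]
  | succ n =>
    rw [map_add, coeff_succ_X_mul, coeff_rescale]
    simp only [eser, coeff_mk, qPoch_succ]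
    have := qPoch_ne q q h n
    have := h n
    field_simp
    ring

lemma uniq1 (q : ℂ) (h : ∀ n : ℕ, 1 - q * q ^ n ≠ 0) (A B : PowerSeries ℂ)
    (hA : A = (1 - X) * rescale q A) (hB : B = (1 - X) * rescale q B)
    (h0 : coeff 0 A = coeff 0 B) : A = B := by
  ext n
  induction n with
  | zero => exact h0
  | succ n ih =>
    have e1 := congrArg (coeff (n + 1)) hA
    have e2 := congrArg (coeff (n + 1)) hB
    rw [sub_mul, one_mul, map_sub, coeff_succ_X_mul, coeff_rescale, coeff_rescale] at e1 e2
    apply mul_left_cancel₀ (h n)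
    rw [ih] at e1
    linear_combination e1 - e2

lemma uniq2 (Q c : ℂ) (hQ : Q ≠ 0) (h : ∀ n : ℕ, 1 - Q * Q ^ n ≠ 0) (h' : ∀ n : ℕ, 1 - c * Q ^ n ≠ 0)
    (A B : PowerSeries ℂ)
    (hA : C Q * A - C (Q + c) * rescale Q A + C c * ((1 - C Q * X) * rescale (Q ^ 2) A) = 0)
    (hB : C Q * B - C (Q + c) * rescale Q B + C c * ((1 - C Q * X) * rescale (Q ^ 2) B) = 0)
    (h0 : coeff 0 A = coeff 0 B) : A = B := by
  ext n
  induction n with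
  | zero => exact h0
  | succ n ih =>
    have e1 := congrArg (coeff (n + 1)) hA
    have e2 := congrArg (coeff (n + 1)) hB
    simp only [sub_mul, one_mul, map_sub, map_add, mul_assoc, coeff_C_mul, coeff_succ_X_mul,
      coeff_rescale, map_zero, add_mul] at e1 e2
    apply mul_left_cancel₀ (mul_ne_zero hQ (mul_ne_zero (h n) (h' n)))
    rw [ih] at e1
    linear_combination e1 - e2

lemma Fser_fe (Q c : ℂ) (h : ∀ n : ℕ, 1 - Q * Q ^ n ≠ 0) (h' : ∀ n : ℕ, 1 - c * Q ^ n ≠ 0) :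
    C Q * ((1 - X) * Fser Q c) - C (Q + c) * rescale Q (Fser Q c)
      + C c * rescale (Q ^ 2) (Fser Q c) = 0 := by
  ext n
  cases n with
  | zero =>
    simp only [sub_mul, one_mul, map_sub, map_add, coeff_C_mul, coeff_zero_X_mul,
      coeff_rescale, map_zero, add_mul]
    simp [Fser, qPoch_zero]
  | succ n =>
    simp only [sub_mul, one_mul, map_sub, map_add, mul_assoc, coeff_C_mul, coeff_succ_X_mul,
      coeff_rescale, map_zero, add_mul]
    simp only [Fser, coeff_mk, qPoch_succ]
    have := qPoch_ne Q Q h n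
    have := qPoch_ne c Q h' n
    have := h n
    have := h' n
    have : 1 - Q ^ n * c ≠ 0 := by rw [mul_comm]; exact h' n
    field_simp
    ring

lemma Gser_fe (Q c : ℂ) (h : ∀ n : ℕ, 1 - Q * Q ^ n ≠ 0) (h' : ∀ n : ℕ, 1 - c * Q ^ n ≠ 0) :
    C Q * Gser Q c - C (Q + c) * rescale Q (Gser Q c)
      + C c * ((1 - C Q * X) * rescale (Q ^ 2) (Gser Q c)) = 0 := by
  ext n
  cases n with
  | zero =>
    simp only [sub_mul, one_mul, map_sub, map_add, mul_assoc, coeff_C_mul, coeff_zero_X_mul,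
      coeff_rescale, map_zero, add_mul]
    simp [Gser, qPoch_zero]
  | succ n =>
    simp only [sub_mul, one_mul, map_sub, map_add, mul_assoc, coeff_C_mul, coeff_succ_X_mul,
      coeff_rescale, map_zero, add_mul]
    simp only [Gser, coeff_mk, qPoch_succ, Nat.triangle_succ]
    have := qPoch_ne Q Q h n
    have := qPoch_ne c Q h' n
    have := h n
    have := h' n
    have : 1 - Q ^ n * c ≠ 0 := by rw [mul_comm]; exact h' n
    field_simp
    ring

lemma heine (Q c : ℂ) (hQ : Q ≠ 0) (h : ∀ n : ℕ, 1 - Q * Q ^ n ≠ 0)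
    (h' : ∀ n : ℕ, 1 - c * Q ^ n ≠ 0) : Eser Q * Fser Q c = Gser Q c := by
  apply uniq2 Q c hQ h h' _ _ _ (Gser_fe Q c h h')
  · simp [Eser, Fser, Gser, qPoch_zero]
  · have e1 := Eser_fe Q h
    have e2 : rescale Q (Eser Q) = (1 - C Q * X) * rescale (Q ^ 2) (Eser Q) := by
      have := congrArg (rescale Q) e1
      rw [map_mul, map_sub, map_one, rescale_X, rescale_rescale, ← sq] at this
      exact this
    have f := Fser_fe Q c h h'
    simp only [map_mul]
    linear_combination (rescale Q (Eser Q)) * f + C Q * Fser Q c * e1 - C c * rescale (Q ^ 2) (Fser Q c) * e2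

lemma rescale_expand (q : ℂ) (A : PowerSeries ℂ) :
    rescale q (expand 2 two_ne_zero A) = expand 2 two_ne_zero (rescale (q ^ 2) A) := by
  ext n
  rw [coeff_rescale, coeff_expand, coeff_expand]
  split_ifs with hd
  · obtain ⟨m, rfl⟩ := hd
    simp [coeff_rescale, pow_mul]
  · simp

lemma E_eq (q : ℂ) (h : ∀ n : ℕ, 1 - q * q ^ n ≠ 0) (h2 : ∀ n : ℕ, 1 - q ^ 2 * (q ^ 2) ^ n ≠ 0) :
    expand 2 two_ne_zero (Eser (q ^ 2)) * eser q = Eser q := by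
  apply uniq1 q h _ _ _ (Eser_fe q h)
  · simp [Eser, eser, qPoch_zero]
  · have e1 := congrArg (expand 2 two_ne_zero) (Eser_fe (q ^ 2) h2)
    rw [map_mul, map_sub, map_one, expand_X, ← rescale_expand] at e1
    have e2 := eser_fe q h
    rw [map_mul, e2]
    linear_combination eser q * e1

lemma sum_expand (A B : PowerSeries ℂ) (n : ℕ) :
    coeff n (expand 2 two_ne_zero A * B) =
      ∑ k ∈ Finset.range (n / 2 + 1), coeff k A * coeff (n - 2 * k) B := by
  rw [coeff_mul, Finset.Nat.sum_antidiagonal_eq_sum_range_succ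
    (fun i j => coeff i (expand 2 two_ne_zero A) * coeff j B)]
  symm
  apply Finset.sum_of_injOn (fun k => 2 * k)
  · intro a _ b _ hab
    simpa using hab
  · intro k hk
    simp at hk ⊢
    omega
  · intro i hi hn
    rw [coeff_expand_of_not_dvd, zero_mul]
    rintro ⟨m, rfl⟩
    apply hn
    simp at hi ⊢
    omega
  · intro k _
    simp

lemma key (q c : ℂ) (hq0 : q ≠ 0) (h : ∀ n : ℕ, 1 - q * q ^ n ≠ 0)
    (h2 : ∀ n : ℕ, 1 - q ^ 2 * (q ^ 2) ^ n ≠ 0) (h' : ∀ n : ℕ, 1 - c * (q ^ 2) ^ n ≠ 0)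
    (A B : PowerSeries ℂ)
    (hA : expand 2 two_ne_zero (Fser (q ^ 2) c) * A = eser q)
    (hB : expand 2 two_ne_zero (Gser (q ^ 2) c) * B = Eser q) : A = B := by
  have hG : expand 2 two_ne_zero (Gser (q ^ 2) c) ≠ 0 := by
    intro h0
    have := congrArg (coeff 0) h0
    simp [Gser, qPoch_zero] at this
  apply mul_left_cancel₀ hG
  rw [hB, ← E_eq q h h2, ← hA, ← heine _ _ (pow_ne_zero 2 hq0) h2 h', map_mul, mul_assoc]

lemma qPoch_inv (a q : ℂ) (ha : a ≠ 0) (hq : q ≠ 0) (n : ℕ) :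
    qPoch a⁻¹ q⁻¹ n = (-1) ^ n * qPoch a q n / (a ^ n * q ^ (n * (n - 1) / 2)) := by
  induction n with
  | zero => simp [qPoch_zero]
  | succ n ih =>
    rw [qPoch_succ, qPoch_succ, ih, Nat.triangle_succ, inv_pow]
    field_simp
    ring

lemma tri_add (a b : ℕ) :
    (a + b) * (a + b - 1) / 2 = a * (a - 1) / 2 + b * (b - 1) / 2 + a * b := by
  induction b with
  | zero => simp
  | succ b ih =>
    rw [← add_assoc, Nat.triangle_succ, Nat.triangle_succ, ih]
    ring

lemma qBinom_inv (q : ℂ) (hq : q ≠ 0) (h : ∀ n : ℕ, 1 - q * q ^ n ≠ 0) (k m : ℕ) :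
    qBinom q (k + m) k = q ^ (k * m) * qBinom q⁻¹ (k + m) k := by
  unfold qBinom
  rw [Nat.add_sub_cancel_left, qPoch_inv q q hq hq, qPoch_inv q q hq hq, qPoch_inv q q hq hq, tri_add]
  have := qPoch_ne q q h k
  have := qPoch_ne q q h m
  field_simp
  ring

lemma coeffA (q : ℂ) (h : ∀ n : ℕ, 1 - q * q ^ n ≠ 0) (q' : ℝ) (hq : (q' : ℂ) = q) (α : ℝ)
    (β : ℕ → ℂ) (hβ : qBetaSpec q' α β) :
    expand 2 two_ne_zero (Fser (q ^ 2) ((q' ^ (2 * α + 2) : ℝ) : ℂ)) *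
      PowerSeries.mk (fun n => β n * 2 ^ n / qPoch q q n) = eser q := by
  ext n
  rw [sum_expand]
  rcases Nat.eq_zero_or_pos n with rfl | hn
  · simp [Fser, eser, qPoch_zero, hβ.1]
  · have e := hβ.2 n hn
    rw [hq] at e
    have h1 : (1 - q) ≠ 0 := by simpa using h 0
    have e' := congrArg (fun z => 2 ^ n / (1 - q) ^ n * z) e
    simp only [Finset.mul_sum] at e'
    simp only [Fser, eser, coeff_mk]
    have hr : (2 : ℂ) ^ n / (1 - q) ^ n * ((-1 / 2) ^ n / qFact q n) = (-1) ^ n / qPoch q q n := by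
      have := qPoch_ne q q h n
      unfold qFact
      rw [div_pow]
      field_simp
    rw [← hr, ← e']
    apply Finset.sum_congr rfl
    intro k hk
    have hk' : 2 * k ≤ n := by simp at hk; omega
    obtain ⟨m, rfl⟩ := Nat.exists_eq_add_of_le hk'
    rw [Nat.add_sub_cancel_left]
    unfold qFact
    rw [pow_add, pow_add]
    have := qPoch_ne q q h m
    generalize qPoch (q ^ 2) (q ^ 2) k = u
    generalize qPoch (((q' ^ (2 * α + 2) : ℝ) : ℂ)) (q ^ 2) k = v
    simp only [div_eq_mul_inv, mul_inv, inv_inv]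
    field_simp

theorem stmt13 (q α : ℝ) (hq : 0 < q) (hq1 : q < 1) (hα : -1 < α)
    (β β' : ℕ → ℂ) (hβ : qBetaSpec q α β) (hβ' : qBetaSpec (1 / q) α β') :
    (∀ (n : ℕ) (x : ℂ),
        B2poly (q : ℂ) β n x = (q : ℂ) ^ (n * (n - 1) / 2) * B1poly ((q : ℂ))⁻¹ β' n x) ∧
      ∀ n : ℕ, β n = (q : ℂ) ^ (n * (n - 1) / 2) * β' n := by
  have hq0 : (q : ℂ) ≠ 0 := by exact_mod_cast hq.ne'
  have gen : ∀ a b : ℝ, 0 < a → a < 1 → 0 < b → b < 1 → ∀ n : ℕ, 1 - (a : ℂ) * (b : ℂ) ^ n ≠ 0 := by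
    intro a b ha ha1 hb hb1 n
    have : 1 - a * b ^ n ≠ 0 := by
      have : b ^ n ≤ 1 := pow_le_one₀ hb.le hb1.le
      nlinarith
    exact_mod_cast this
  have h := gen q q hq hq1 hq hq1
  have hs0 : 0 < q ^ 2 := by positivity
  have hs1 : q ^ 2 < 1 := by nlinarith
  have h2 := gen (q ^ 2) (q ^ 2) hs0 hs1 hs0 hs1
  have hc0 : 0 < q ^ (2 * α + 2) := Real.rpow_pos_of_pos hq _
  have hc1 : q ^ (2 * α + 2) < 1 := Real.rpow_lt_one hq.le hq1 (by linarith)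
  have h' := gen (q ^ (2 * α + 2)) (q ^ 2) hc0 hc1 hs0 hs1
  have hinv : (((1 / q) ^ (2 * α + 2) : ℝ) : ℂ) = ((q ^ (2 * α + 2) : ℝ) : ℂ)⁻¹ := by
    rw [one_div, Real.inv_rpow hq.le]; push_cast; rfl
  have hcc : ((q ^ (2 * α + 2) : ℝ) : ℂ) ≠ 0 := by exact_mod_cast hc0.ne'
  simp only [Complex.ofReal_pow] at h2
  simp only [Complex.ofReal_pow] at h'
  have hi : ∀ n : ℕ, 1 - (q : ℂ)⁻¹ * (q : ℂ)⁻¹ ^ n ≠ 0 := by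
    intro n h0
    apply h n
    rw [← pow_succ', inv_pow, sub_eq_zero, eq_comm, inv_eq_one] at h0
    rw [← pow_succ', h0, sub_self]
  have hA := coeffA q h q rfl α β hβ
  have hB := coeffA (q : ℂ)⁻¹ hi (1 / q) (by push_cast; simp) α β' hβ'
  rw [hinv] at hB
  generalize ((q ^ (2 * α + 2) : ℝ) : ℂ) = c at *
  generalize (q : ℂ) = p at *
  have hB2 : expand 2 two_ne_zero (Gser (p ^ 2) c) *
      PowerSeries.mk (fun n => p ^ (n * (n - 1) / 2) * β' n * 2 ^ n / qPoch p p n) = Eser p := by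
    apply rescale_injective (neg_ne_zero.mpr hq0)
    rw [map_mul, rescale_expand, neg_sq]
    have t1 : rescale (p ^ 2) (Gser (p ^ 2) c) = Fser (p⁻¹ ^ 2) c⁻¹ := by
      ext k
      have hp2 : p ^ 2 ≠ 0 := pow_ne_zero 2 hq0
      rw [coeff_rescale]
      simp only [Gser, Fser, coeff_mk]
      rw [inv_pow, qPoch_inv _ _ hp2 hp2, qPoch_inv _ _ hcc hp2]
      have := qPoch_ne _ _ h2 k
      have := qPoch_ne _ _ h' k
      have hs : ((-1 : ℂ) ^ k) ^ 2 = 1 := by rw [← pow_mul, mul_comm, pow_mul]; simp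
      generalize (-1 : ℂ) ^ k = s at *
      have : s ≠ 0 := by rintro rfl; simp at hs
      generalize k * (k - 1) / 2 = T
      field_simp
      linear_combination hs
    have t2 : rescale (-p) (PowerSeries.mk
        (fun n => p ^ (n * (n - 1) / 2) * β' n * 2 ^ n / qPoch p p n)) =
        PowerSeries.mk (fun n => β' n * 2 ^ n / qPoch p⁻¹ p⁻¹ n) := by
      ext k
      rw [coeff_rescale]
      simp only [coeff_mk]
      rw [qPoch_inv _ _ hq0 hq0, neg_pow]
      have := qPoch_ne _ _ h k
      have hs : ((-1 : ℂ) ^ k) ^ 2 = 1 := by rw [← pow_mul, mul_comm, pow_mul]; simp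
      generalize (-1 : ℂ) ^ k = s at *
      have : s ≠ 0 := by rintro rfl; simp at hs
      generalize k * (k - 1) / 2 = T
      field_simp
      linear_combination β' k * hs
    have t3 : rescale (-p) (Eser p) = eser p⁻¹ := by
      ext k
      rw [coeff_rescale]
      simp only [Eser, eser, coeff_mk]
      rw [qPoch_inv _ _ hq0 hq0, neg_pow]
      have := qPoch_ne _ _ h k
      have hs : ((-1 : ℂ) ^ k) ^ 2 = 1 := by rw [← pow_mul, mul_comm, pow_mul]; simp
      generalize (-1 : ℂ) ^ k = s at *
      have : s ≠ 0 := by rintro rfl; simp at hs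
      generalize k * (k - 1) / 2 = T
      field_simp
      linear_combination hs
    rw [t1, t2, t3, hB]
  have main : ∀ n : ℕ, β n = p ^ (n * (n - 1) / 2) * β' n := by
    intro n
    have := congrArg (coeff n) (key p c hq0 h h2 h' _ _ hA hB2)
    simp only [coeff_mk] at this
    have hp := qPoch_ne p p h n
    field_simp at this
    linear_combination this
  refine ⟨?_, main⟩
  intro n x
  unfold B2poly B1poly
  rw [Finset.mul_sum]
  apply Finset.sum_congr rfl
  intro k hk
  obtain ⟨m, rfl⟩ := Nat.exists_eq_add_of_le (Nat.lt_succ_iff.mp (Finset.mem_range.mp hk))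
  rw [Nat.add_sub_cancel_left, qBinom_inv p hq0 h, main m, tri_add]
  ring
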